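/- Let b ≥ 2, t ≥ 1 and n ≥ 1 be integers. Then Σ_{n ≤ a_t < a_{t−1} < ⋯ < a_1} ∏_{j=1}^{t} b^{−a_j} = b^{−t(n−1)} ∏_{i=1}^{t} 1/(b^{i}−1), where the sum is over all strictly increasing t-tuples of integers (a_t, a_{t−1}, …, a_1) with a_t ≥ n. -/

import Mathlib

namespace QMC

/-- Strictly decreasing `t`-tuples all of whose entries are at least `n`. -/
abbrev Tup (t n : ℕ) := {a : Fin t → ℕ // StrictAnti a ∧ ∀ j, n ≤ a j}

/-- Split a tuple into its last (smallest) entry and the rest. -/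
def tupEquiv (t n : ℕ) : (Σ k : ℕ, Tup t (n + k + 1)) ≃ Tup (t + 1) n where
  toFun p := ⟨Fin.snoc (α := fun _ => ℕ) p.2.1 (n + p.1), by
    obtain ⟨k, a, ha, h⟩ := p
    refine ⟨?_, ?_⟩
    · intro i j hij
      induction j using Fin.lastCases with
      | last =>
        induction i using Fin.lastCases with
        | last => exact absurd hij (lt_irrefl _)
        | cast i =>
          have := h i
          simp only [Fin.snoc_last, Fin.snoc_castSucc]
          omega
      | cast j =>
        induction i using Fin.lastCases with
        | last => exact absurd hij (not_lt.2 (Fin.le_last _))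
        | cast i =>
          simp only [Fin.snoc_castSucc]
          exact ha (Fin.castSucc_lt_castSucc_iff.1 hij)
    · intro j
      induction j using Fin.lastCases with
      | last => simp
      | cast j =>
        have := h j
        simp only [Fin.snoc_castSucc]
        omega⟩
  invFun a := ⟨a.1 (Fin.last t) - n, ⟨fun j => a.1 j.castSucc, by
    obtain ⟨a, ha, h⟩ := a
    refine ⟨fun i j hij => ha (Fin.castSucc_lt_castSucc_iff.2 hij), fun j => ?_⟩
    have h1 := h (Fin.last t)
    have h2 := ha (Fin.castSucc_lt_last j)
    simp only
    omega⟩⟩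
  left_inv p := by
    obtain ⟨k, a, ha⟩ := p
    have : n + k - n = k := by omega
    refine Sigma.ext (by simp) ?_
    simp only [Fin.snoc_last, Fin.snoc_castSucc]
    congr 1 <;> simp [this]
  right_inv a := by
    obtain ⟨a, ha, h⟩ := a
    apply Subtype.ext
    funext j
    induction j using Fin.lastCases with
    | last =>
      have := h (Fin.last t)
      simp only [Fin.snoc_last]
      omega
    | cast j => simp only [Fin.snoc_castSucc]

theorem hasSum_tup (b : ℕ) (hb : 2 ≤ b) (t : ℕ) : ∀ m : ℕ,
    HasSum (fun a : Tup t (m + 1) => ∏ j, ((b : ℝ) ^ a.1 j)⁻¹)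
      (((b : ℝ) ^ (t * m))⁻¹ * ∏ i ∈ Finset.Icc 1 t, ((b : ℝ) ^ i - 1)⁻¹) := by
  have hb1 : (1 : ℝ) < b := by exact_mod_cast hb
  have hb0 : (b : ℝ) ≠ 0 := by positivity
  induction t with
  | zero =>
    intro m
    let a0 : Tup 0 (m + 1) := ⟨Fin.elim0, fun i => i.elim0, fun i => i.elim0⟩
    have : Unique (Tup 0 (m + 1)) := ⟨⟨a0⟩, fun a => Subtype.ext (funext fun i => i.elim0)⟩
    simpa using hasSum_unique (fun a : Tup 0 (m + 1) => ∏ j, ((b : ℝ) ^ a.1 j)⁻¹)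
  | succ t ih =>
    intro m
    rw [← (tupEquiv t (m + 1)).hasSum_iff]
    set C := ∏ i ∈ Finset.Icc 1 t, ((b : ℝ) ^ i - 1)⁻¹ with hC
    have hf : ∀ k : ℕ, HasSum (fun a : Tup t (m + 1 + k + 1) =>
        ((fun a : Tup (t + 1) (m + 1) => ∏ j, ((b : ℝ) ^ a.1 j)⁻¹) ∘ tupEquiv t (m + 1)) ⟨k, a⟩)
        ((((b : ℝ) ^ (t * (m + 1 + k)))⁻¹ * C) * ((b : ℝ) ^ (m + 1 + k))⁻¹) := by
      intro k
      have h := (ih (m + 1 + k)).mul_right (((b : ℝ) ^ (m + 1 + k))⁻¹)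
      refine (congrArg (fun f => HasSum f _) (funext fun a => ?_)).mp h
      simp [tupEquiv, Fin.prod_univ_castSucc, mul_comm]
    have hp : (1 : ℝ) < (b : ℝ) ^ (t + 1) := one_lt_pow₀ hb1 (by omega)
    have hg : HasSum (fun k : ℕ =>
        (((b : ℝ) ^ (t * (m + 1 + k)))⁻¹ * C) * ((b : ℝ) ^ (m + 1 + k))⁻¹)
        (((b : ℝ) ^ ((t + 1) * m))⁻¹ * ∏ i ∈ Finset.Icc 1 (t + 1), ((b : ℝ) ^ i - 1)⁻¹) := by
      have h := (hasSum_geometric_of_lt_one (r := ((b : ℝ) ^ (t + 1))⁻¹) (by positivity)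
        (inv_lt_one_of_one_lt₀ hp)).mul_left (C * ((b : ℝ) ^ ((t + 1) * (m + 1)))⁻¹)
      have e1 : (fun k : ℕ => C * ((b : ℝ) ^ ((t + 1) * (m + 1)))⁻¹ * (((b : ℝ) ^ (t + 1))⁻¹) ^ k)
          = fun k : ℕ =>
          (((b : ℝ) ^ (t * (m + 1 + k)))⁻¹ * C) * ((b : ℝ) ^ (m + 1 + k))⁻¹ := by
        funext k
        rw [← inv_pow, ← inv_pow, ← inv_pow, ← inv_pow]
        ring
      have e2 : C * ((b : ℝ) ^ ((t + 1) * (m + 1)))⁻¹ * (1 - ((b : ℝ) ^ (t + 1))⁻¹)⁻¹ =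
          ((b : ℝ) ^ ((t + 1) * m))⁻¹ * ∏ i ∈ Finset.Icc 1 (t + 1), ((b : ℝ) ^ i - 1)⁻¹ := by
        rw [Finset.prod_Icc_succ_top (by omega), ← hC, mul_add (t + 1) m 1, pow_add, mul_one]
        have h1 : (b : ℝ) ^ (t + 1) - 1 ≠ 0 := by linarith
        have h2 : (b : ℝ) ^ (t + 1) ≠ 0 := by positivity
        have h3 : (b : ℝ) ^ ((t + 1) * m) ≠ 0 := by positivity
        generalize (b : ℝ) ^ (t + 1) = x at *
        generalize (b : ℝ) ^ ((t + 1) * m) = y at *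
        have h4 : 1 - x⁻¹ = (x - 1) / x := by field_simp
        rw [h4]
        field_simp
      rw [← e1, ← e2]
      exact h
    refine HasSum.sigma_of_hasSum hg hf ?_
    rw [summable_sigma_of_nonneg]
    · refine ⟨fun k => (hf k).summable, ?_⟩
      convert hg.summable using 2 with k
      exact (hf k).tsum_eq
    · intro p
      exact Finset.prod_nonneg fun j _ => by positivity

/-- For integers `b ≥ 2`, `t ≥ 1`, `n ≥ 1`, the sum of `∏_{j=1}^t b^{-a_j}` over all
strictly decreasing tuples `a_1 > a_2 > ⋯ > a_t ≥ n` equals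
`b^{-t(n-1)} ∏_{i=1}^t 1/(bⁱ - 1)`. -/
theorem sum_decreasing_tuples (b t n : ℕ) (hb : 2 ≤ b) (ht : 1 ≤ t) (hn : 1 ≤ n) :
    ∑' a : {a : Fin t → ℕ // StrictAnti a ∧ n ≤ a ⟨t - 1, by omega⟩},
        ∏ j, ((b : ℝ) ^ a.1 j)⁻¹ =
      ((b : ℝ) ^ (t * (n - 1)))⁻¹ * ∏ i ∈ Finset.Icc 1 t, ((b : ℝ) ^ i - 1)⁻¹ := by
  obtain ⟨m, rfl⟩ : ∃ m, n = m + 1 := ⟨n - 1, by omega⟩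
  have key := hasSum_tup b hb t m
  rw [Nat.add_sub_cancel, ← key.tsum_eq]
  have e : ∀ a : Fin t → ℕ, (StrictAnti a ∧ m + 1 ≤ a ⟨t - 1, by omega⟩) ↔
      (StrictAnti a ∧ ∀ j, m + 1 ≤ a j) := by
    intro a
    refine and_congr_right fun ha => ⟨fun h j => h.trans (ha.antitone ?_), fun h => h _⟩
    have := j.2
    rw [Fin.le_def]
    simp only
    omega
  exact (Equiv.subtypeEquivRight e).tsum_eq
    (fun a : Tup t (m + 1) => ∏ j, ((b : ℝ) ^ a.1 j)⁻¹)

end QMC
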